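/- arXiv:2203.09465 — 2 statements merged into one kernel-verified Lean document; each statement's English description precedes it below -/
import Mathlib

section
/- The infinite series ∑_{n=1}^{∞} 1/((4n−2)(4n−3)) converges to π/8 + (1/4)·ln 2. -/
open Real

/-!
Each term is `1/(4n+1) - 1/(4n+2)`. Up to `N` these add up to
`S(2N)/2 + (H(4N) - (3/2) H(2N) + H(N)/2)/2`, where `S` denotes the partial sums of the Leibniz
series for `π/4` and `H` the harmonic numbers. Since `H(N) - log N` converges to the
Euler–Mascheroni constant `γ`, and the coefficients `1, -3/2, 1/2` sum to zero, `γ` cancels and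
the harmonic combination tends to `log 4 - (3/2) log 2 = (log 2)/2`.
-/

/-- The `N`-th partial sum in terms of Leibniz partial sums and harmonic numbers. -/
lemma partial_sum_eq (N : ℕ) :
    ∑ n ∈ Finset.range N, 1 / ((4*((n:ℝ)+1)-2) * (4*((n:ℝ)+1)-3)) =
      (1/2) * ∑ i ∈ Finset.range (2 * N), (-1 : ℝ) ^ i / (2 * i + 1) +
      (1/2) * ((harmonic (4 * N) : ℝ) - (3/2) * (harmonic (2 * N) : ℝ)
        + (1/2) * (harmonic N : ℝ)) := by
  induction N with
  | zero => simp
  | succ N ih =>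
    rw [Finset.sum_range_succ, ih, show 2 * (N + 1) = 2 * N + 1 + 1 by ring,
      show 4 * (N + 1) = 4 * N + 1 + 1 + 1 + 1 by ring]
    simp only [Finset.sum_range_succ, harmonic_succ]
    have e : (-1 : ℝ) ^ (2 * N) = 1 := by simp
    rw [pow_succ, e]
    push_cast
    have hN : (0 : ℝ) ≤ N := N.cast_nonneg
    have h1 : (4 * ((N : ℝ) + 1) - 2) ≠ 0 := by linarith
    have h2 : (4 * ((N : ℝ) + 1) - 3) ≠ 0 := by linarith
    have key : 1 / ((4*((N:ℝ)+1)-2) * (4*((N:ℝ)+1)-3)) = 1 / (4 * N + 1) - 1 / (4 * N + 2) := by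
      have h3 : (4 * (N : ℝ) + 1) ≠ 0 := by positivity
      have h4 : (4 * (N : ℝ) + 2) ≠ 0 := by positivity
      rw [div_sub_div _ _ h3 h4]
      congr 1 <;> ring
    rw [key]
    field_simp
    ring

lemma tendsto_harmonic_comb :
    Filter.Tendsto (fun N : ℕ => (harmonic (4 * N) : ℝ) - (3/2) * (harmonic (2 * N) : ℝ)
        + (1/2) * (harmonic N : ℝ)) Filter.atTop (nhds ((1/2) * Real.log 2)) := by
  have h := Real.tendsto_harmonic_sub_log
  have h2 := h.comp (Filter.tendsto_id.const_mul_atTop' (show 0 < 2 by norm_num))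
  have h4 := h.comp (Filter.tendsto_id.const_mul_atTop' (show 0 < 4 by norm_num))
  have H := ((h4.sub (h2.const_mul (3/2))).add (h.const_mul (1/2))).add_const ((1/2) * Real.log 2)
  have e : eulerMascheroniConstant - 3 / 2 * eulerMascheroniConstant
      + 1 / 2 * eulerMascheroniConstant + 1 / 2 * Real.log 2 = 1 / 2 * Real.log 2 := by ring
  rw [e] at H
  refine H.congr' ?_
  filter_upwards [Filter.eventually_gt_atTop 0] with N hN
  have hN' : (N : ℝ) ≠ 0 := by positivity
  have l4 : Real.log 4 = 2 * Real.log 2 := by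
    rw [show (4 : ℝ) = 2 ^ 2 by norm_num, Real.log_pow]; norm_num
  simp only [Function.comp_apply, id]
  push_cast
  rw [Real.log_mul (by norm_num) hN', Real.log_mul (by norm_num) hN', l4]
  ring

theorem stmt_3 :
    HasSum (fun n : ℕ => 1 / ((4*((n:ℝ)+1)-2) * (4*((n:ℝ)+1)-3))) (π / 8 + (1/4) * Real.log 2) := by
  rw [hasSum_iff_tendsto_nat_of_nonneg]
  · simp only [partial_sum_eq]
    have hS := Real.tendsto_sum_pi_div_four.comp
      (Filter.tendsto_id.const_mul_atTop' (show 0 < 2 by norm_num))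
    have H := (hS.const_mul (1/2)).add (tendsto_harmonic_comb.const_mul (1/2))
    have e : π / 8 + (1/4) * Real.log 2 = 1/2 * (π / 4) + 1/2 * (1/2 * Real.log 2) := by ring
    rw [e]
    exact H
  · intro n
    have hn : (0 : ℝ) ≤ n := n.cast_nonneg
    exact one_div_nonneg.2 (mul_nonneg (by linarith) (by linarith))
end

section
/- The infinite series ∑_{n=1}^{∞} 1/(n²(2n+1)) converges to (π² + 24·ln 2 − 24)/6. -/
/-!
By partial fractions, `1 / (m² (2m+1)) = 1/m² - 4 (1/(2m) - 1/(2m+1))`. The squares sum to `π²/6`.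
The partial sums of `1/(2m) - 1/(2m+1)` over `1 ≤ m ≤ N` equal `1 + H_N - H_{2N+1}`, where `H` is
the harmonic sequence. Since `H_n - log (n+1)` converges (to Euler's constant) and
`log (2N+2) - log (N+1) = log 2`, these tend to `1 - log 2`.
-/

open Real

open Filter Topology in
/-- The logarithm is normalised at `2N+2` and `N+1`, so that the difference of logarithms is exactly
`log 2` and Euler's constant cancels. -/
lemma tendsto_harmonic_sub_harmonic :
    Tendsto (fun N : ℕ => (harmonic N : ℝ) - harmonic (2 * N + 1)) atTop (𝓝 (-Real.log 2)) := by
  have h := Real.tendsto_harmonic_sub_log_add_one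
  have hsub : Tendsto (fun N : ℕ => 2 * N + 1) atTop atTop :=
    tendsto_atTop_mono (fun N => by rw [id]; omega) tendsto_id
  have h3 := (h.sub (h.comp hsub)).sub_const (Real.log 2)
  rw [sub_self, zero_sub] at h3
  refine h3.congr fun N => ?_
  have hlog : Real.log (((2 * N + 1 : ℕ) : ℝ) + 1) = Real.log 2 + Real.log ((N : ℝ) + 1) := by
    rw [← Real.log_mul (by norm_num) (by positivity)]
    congr 1
    push_cast
    ring
  simp only [Function.comp_apply, hlog]
  ring

lemma sum_range_eq_harmonic (N : ℕ) :
    ∑ n ∈ Finset.range N, 1 / (((n:ℝ)+1)^2 * (2*((n:ℝ)+1)+1)) =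
      ∑ n ∈ Finset.range N, 1 / ((n:ℝ)+1)^2
        - 4 * (1 + ((harmonic N : ℝ) - harmonic (2 * N + 1))) := by
  induction N with
  | zero => simp [harmonic_succ]
  | succ N ih =>
    rw [Finset.sum_range_succ, Finset.sum_range_succ, ih,
      show 2 * (N + 1) + 1 = (2 * N + 1) + 1 + 1 by ring,
      harmonic_succ N, harmonic_succ (2 * N + 1 + 1), harmonic_succ (2 * N + 1)]
    push_cast
    have h1 : (N : ℝ) + 1 ≠ 0 := by positivity
    have h2 : 2 * ((N : ℝ) + 1) + 1 ≠ 0 := by positivity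
    rw [show 2 * (N : ℝ) + 1 + 1 = 2 * ((N : ℝ) + 1) by ring]
    field_simp
    ring

theorem stmt_12 :
    HasSum (fun n : ℕ => 1 / (((n:ℝ)+1)^2 * (2*((n:ℝ)+1)+1))) ((π^2 + 24 * Real.log 2 - 24) / 6) := by
  rw [hasSum_iff_tendsto_nat_of_nonneg (fun n => by positivity)]
  -- The term of index `0` in `hasSum_zeta_two` is `1 / 0 = 0`, so shifting does not alter the sum.
  have hz : HasSum (fun n : ℕ => 1 / ((n:ℝ)+1)^2) (π ^ 2 / 6) := by
    simpa using (hasSum_nat_add_iff' 1).mpr hasSum_zeta_two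
  have h := hz.tendsto_sum_nat.sub ((tendsto_harmonic_sub_harmonic.const_add 1).const_mul 4)
  rw [show (π^2 + 24 * Real.log 2 - 24) / 6 = π ^ 2 / 6 - 4 * (1 + -Real.log 2) by ring]
  exact h.congr fun N => (sum_range_eq_harmonic N).symm
end
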